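/- The tautological tableau attains Cartan's bound for every flag: let W, V be finite-dimensional real vector spaces with dim W = n, dim V = m, let k ≥ 1, and take the full tableau T = Λ^k(W;V) of (k−1)-derivations with trivial symbol. For any full flag 0 = W_0 ⊂ … ⊂ W_n = W, with T_{W_i} = {c ∈ T : c(u_1,…,u_k) = 0 whenever u_1,…,u_k ∈ W_i} and Cartan characters s_i = dim T_{W_{i-1}} − dim T_{W_i}, one has dim ker( δ : Hom(W,T) → Λ^{k+1}(W;V) ) = s_1 + 2·s_2 + … + n·s_n, where (δξ)(w_0,…,w_k) = Σ_{i=0}^{k} (−1)^i ξ(w_i)(w_0,…,ŵ_i,…,w_k). -/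

import Mathlib

open Module

variable {W : Type*} [AddCommGroup W] [Module ℝ W] [FiniteDimensional ℝ W]
variable {V : Type*} [AddCommGroup V] [Module ℝ V] [FiniteDimensional ℝ V]

/-- The alternating `k`-linear maps `W^k → V` vanishing whenever all of their arguments lie
in the subspace `U ⊆ W`; for the tautological (full) tableau `T = Λ^k(W;V)`, this is `T_U`. -/
def vanishingOn (k : ℕ) (U : Submodule ℝ W) :
    Submodule ℝ (AlternatingMap ℝ W V (Fin k)) where
  carrier := {c | ∀ u : Fin k → W, (∀ i, u i ∈ U) → c u = 0}
  zero_mem' := by intro u _; simp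
  add_mem' := by intro a b ha hb u hu; simp [ha u hu, hb u hu]
  smul_mem' := by intro r a ha u hu; simp [ha u hu]

/-- The kernel of the Spencer differential `δ : Hom(W, Λ^k(W;V)) → Λ^{k+1}(W;V)`,
`(δξ)(w₀,…,w_k) = ∑ᵢ (-1)^i ξ(wᵢ)(w₀,…,ŵᵢ,…,w_k)`; this is the first prolongation of the
tautological tableau `Λ^k(W;V)` of `(k−1)`-derivations with trivial symbol. -/
def spencerKer (k : ℕ) (W V : Type*) [AddCommGroup W] [Module ℝ W]
    [AddCommGroup V] [Module ℝ V] :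
    Submodule ℝ (W →ₗ[ℝ] AlternatingMap ℝ W V (Fin k)) where
  carrier := {ξ | ∀ w : Fin (k + 1) → W,
    ∑ i : Fin (k + 1), ((-1 : ℝ) ^ (i : ℕ)) • ξ (w i) (w ∘ i.succAbove) = 0}
  zero_mem' := by intro w; simp
  add_mem' := by
    intro a b ha hb w
    have h := ha w
    have h' := hb w
    simp only [LinearMap.add_apply, AlternatingMap.add_apply, smul_add,
      Finset.sum_add_distrib, h, h', add_zero]
  smul_mem' := by
    intro c ξ h w
    have hw := h w
    calc ∑ i : Fin (k + 1), ((-1 : ℝ) ^ (i : ℕ)) • (c • ξ) (w i) (w ∘ i.succAbove)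
        = c • ∑ i : Fin (k + 1), ((-1 : ℝ) ^ (i : ℕ)) • ξ (w i) (w ∘ i.succAbove) := by
          rw [Finset.smul_sum]
          refine Finset.sum_congr rfl fun i _ => ?_
          rw [LinearMap.smul_apply, AlternatingMap.smul_apply, smul_comm]
      _ = 0 := by rw [hw, smul_zero]

/-! Summation by parts along the flag, with `T_W = 0`, turns `s₁ + 2 s₂ + … + n sₙ` into
`dim T_{W₀} + … + dim T_{Wₙ₋₁}`. Restriction of alternating maps from `W` to a subspace is onto,
so `dim T_{Wᵢ} = (C(n, k) - C(i, k)) dim V`, and by the hockey-stick identity the sum is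
`(n C(n, k) - C(n, k + 1)) dim V`. This is also the dimension of `ker δ`, because `δ` is onto:
antisymmetrizing `w ↦ c(w, ·, …, ·)` gives `(k + 1) c`. -/

theorem sum_succ_mul_sub_succ_add_of_antitone {n : ℕ} {f : Fin (n + 1) → ℕ} (hf : Antitone f) :
    ∑ i : Fin n, ((i : ℕ) + 1) * (f i.castSucc - f i.succ) + n * f (Fin.last n) =
      ∑ i : Fin n, f i.castSucc := by
  induction n with
  | zero => simp
  | succ n ih =>
    have hinit := ih (hf.comp_monotone Fin.strictMono_castSucc.monotone)
    obtain ⟨d, hd⟩ := Nat.exists_eq_add_of_le (hf (Fin.le_last (Fin.last n).castSucc))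
    simp only [Function.comp_apply, ← Fin.succ_castSucc] at hinit
    rw [Fin.sum_univ_castSucc, Fin.sum_univ_castSucc, ← hinit, Fin.succ_last, hd,
      Nat.add_sub_cancel_left, Fin.val_last]
    simp only [Fin.val_castSucc]
    ring

theorem sum_fin_choose (n k : ℕ) : ∑ i : Fin n, (i : ℕ).choose k = n.choose (k + 1) := by
  induction n with
  | zero => simp
  | succ n ih =>
    rw [Fin.sum_univ_castSucc, Nat.choose_succ_succ', add_comm]
    simpa using ih

theorem finrank_ker_add_finrank_of_surjective {K M N : Type*} [DivisionRing K] [AddCommGroup M]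
    [Module K M] [FiniteDimensional K M] [AddCommGroup N] [Module K N] {f : M →ₗ[K] N}
    (hf : Function.Surjective f) :
    finrank K (LinearMap.ker f) + finrank K N = finrank K M := by
  rw [← f.finrank_range_add_finrank_ker, LinearMap.range_eq_top.2 hf, finrank_top, add_comm]

section AlternatingPullback

variable {R M M' N ι : Type*} [CommSemiring R] [AddCommMonoid M] [Module R M]
  [AddCommMonoid M'] [Module R M'] [AddCommMonoid N] [Module R N]

/-- Pullback of alternating maps along a linear map, as a linear map between spaces of
alternating maps. Pulling back along `U.subtype` is restriction to the submodule `U`. -/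
def alternatingPullback (f : M →ₗ[R] M') : (M' [⋀^ι]→ₗ[R] N) →ₗ[R] M [⋀^ι]→ₗ[R] N where
  toFun c := c.compLinearMap f
  map_add' _ _ := rfl
  map_smul' _ _ := rfl

theorem alternatingPullback_surjective_of_leftInverse {f : M →ₗ[R] M'} {g : M' →ₗ[R] M}
    (hgf : g ∘ₗ f = LinearMap.id) :
    Function.Surjective (alternatingPullback f : (M' [⋀^ι]→ₗ[R] N) →ₗ[R] M [⋀^ι]→ₗ[R] N) := by
  intro c
  refine ⟨c.compLinearMap g, AlternatingMap.ext fun v => ?_⟩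
  exact congrArg c (funext fun i => LinearMap.congr_fun hgf (v i))

end AlternatingPullback

section AlternatingMap

variable {R M N : Type*} [CommRing R] [AddCommGroup M] [Module R M]
  [AddCommGroup N] [Module R N] {n : ℕ}

theorem alternatizeUncurryFinLM_surjective (hn : IsUnit ((n + 1 : ℕ) : R)) :
    Function.Surjective
      (AlternatingMap.alternatizeUncurryFinLM (R := R) (M := M) (N := N) (n := n)) := by
  obtain ⟨u, hu⟩ := hn
  intro c
  refine ⟨(↑u⁻¹ : R) • c.curryLeft, ?_⟩
  rw [map_smul, AlternatingMap.alternatizeUncurryFinLM_apply,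
    AlternatingMap.alternatizeUncurryFin_curryLeft, ← Nat.cast_smul_eq_nsmul R, ← hu, smul_smul,
    Units.inv_mul, one_smul]

instance instModuleFiniteAlternatingMapFin [Module.Free R M] [Module.Finite R M]
    [Module.Finite R N] :
    Module.Finite R (M [⋀^Fin n]→ₗ[R] N) :=
  Module.Finite.equiv exteriorPower.alternatingMapLinearEquiv.symm

variable (R M N n) in
theorem finrank_alternatingMap_fin [Nontrivial R] [Module.Free R M] [Module.Finite R M]
    [Module.Free R N] [Module.Finite R N] :
    finrank R (M [⋀^Fin n]→ₗ[R] N) = (finrank R M).choose n * finrank R N := by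
  rw [exteriorPower.alternatingMapLinearEquiv.finrank_eq, finrank_linearMap,
    exteriorPower.finrank_eq]

end AlternatingMap

section VanishingOn

variable {E F : Type*} [AddCommGroup E] [Module ℝ E] [AddCommGroup F] [Module ℝ F]

theorem vanishingOn_antitone (k : ℕ) :
    Antitone (vanishingOn k : Submodule ℝ E → Submodule ℝ (E [⋀^Fin k]→ₗ[ℝ] F)) :=
  fun _ _ hU _ hc u hu => hc u fun i => hU (hu i)

theorem vanishingOn_top (k : ℕ) : vanishingOn k (⊤ : Submodule ℝ E) (V := F) = ⊥ :=
  (Submodule.eq_bot_iff _).2 fun _ hc => AlternatingMap.ext fun u => hc u fun _ => trivial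

theorem vanishingOn_eq_ker (k : ℕ) (U : Submodule ℝ E) :
    vanishingOn k U (V := F) = LinearMap.ker (alternatingPullback U.subtype) := by
  ext c
  refine ⟨fun hc => AlternatingMap.ext fun u => hc _ fun i => (u i).2, fun hc u hu => ?_⟩
  exact DFunLike.congr_fun (LinearMap.mem_ker.1 hc) fun i => (⟨u i, hu i⟩ : U)

theorem finrank_vanishingOn_add [FiniteDimensional ℝ E] [FiniteDimensional ℝ F] (k : ℕ)
    (U : Submodule ℝ E) :
    finrank ℝ (vanishingOn k U (V := F)) + (finrank ℝ U).choose k * finrank ℝ F =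
      (finrank ℝ E).choose k * finrank ℝ F := by
  obtain ⟨p, hp⟩ := U.subtype.exists_leftInverse_of_injective U.ker_subtype
  rw [vanishingOn_eq_ker, ← finrank_alternatingMap_fin, ← finrank_alternatingMap_fin]
  exact finrank_ker_add_finrank_of_surjective (alternatingPullback_surjective_of_leftInverse hp)

end VanishingOn

section SpencerKer

theorem spencerKer_eq_ker (k : ℕ) (E F : Type*) [AddCommGroup E] [Module ℝ E]
    [AddCommGroup F] [Module ℝ F] :
    spencerKer k E F = LinearMap.ker AlternatingMap.alternatizeUncurryFinLM := by
  ext ξ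
  have hδ (w : Fin (k + 1) → E) :
      ∑ i : Fin (k + 1), ((-1 : ℝ) ^ (i : ℕ)) • ξ (w i) (w ∘ i.succAbove) =
        AlternatingMap.alternatizeUncurryFin ξ w := by
    rw [AlternatingMap.alternatizeUncurryFin_apply]
    refine Finset.sum_congr rfl fun i _ => ?_
    rw [← Int.cast_smul_eq_zsmul ℝ]
    push_cast
    rfl
  rw [LinearMap.mem_ker, AlternatingMap.alternatizeUncurryFinLM_apply, AlternatingMap.ext_iff]
  exact forall_congr' fun w => by rw [hδ, AlternatingMap.zero_apply]

variable (k : ℕ) (E F : Type*) [AddCommGroup E] [Module ℝ E] [FiniteDimensional ℝ E]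
  [AddCommGroup F] [Module ℝ F] [FiniteDimensional ℝ F]

theorem finrank_spencerKer_add :
    finrank ℝ (spencerKer k E F) + (finrank ℝ E).choose (k + 1) * finrank ℝ F =
      finrank ℝ E * ((finrank ℝ E).choose k * finrank ℝ F) := by
  have hk : IsUnit ((k + 1 : ℕ) : ℝ) := (Nat.cast_ne_zero.2 k.succ_ne_zero).isUnit
  rw [spencerKer_eq_ker, ← finrank_alternatingMap_fin, ← finrank_alternatingMap_fin,
    ← finrank_linearMap ℝ ℝ]
  exact finrank_ker_add_finrank_of_surjective (alternatizeUncurryFinLM_surjective hk)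

variable {E} in
theorem finrank_spencerKer_eq_sum_finrank_vanishingOn {n : ℕ} (hn : finrank ℝ E = n)
    {U : Fin n → Submodule ℝ E} (hU : ∀ i, finrank ℝ (U i) = i) :
    finrank ℝ (spencerKer k E F) = ∑ i, finrank ℝ (vanishingOn k (U i) (V := F)) := by
  refine Nat.add_right_cancel (m := n.choose (k + 1) * finrank ℝ F) ?_
  calc finrank ℝ (spencerKer k E F) + n.choose (k + 1) * finrank ℝ F
      = n * (n.choose k * finrank ℝ F) := by
        rw [← hn, finrank_spencerKer_add]
    _ = ∑ i : Fin n, (finrank ℝ (vanishingOn k (U i) (V := F)) +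
          (i : ℕ).choose k * finrank ℝ F) := by
        simp_rw [← hU, finrank_vanishingOn_add, hn, Fin.sum_const, smul_eq_mul]
    _ = ∑ i, finrank ℝ (vanishingOn k (U i) (V := F)) + n.choose (k + 1) * finrank ℝ F := by
        rw [Finset.sum_add_distrib, ← Finset.sum_mul, sum_fin_choose]

end SpencerKer

/-- **The tautological tableau attains Cartan's bound for every flag**: for `k ≥ 1`, the
full tableau `T = Λ^k(W;V)` of `(k−1)`-derivations with trivial symbol, and any full flag
`0 = W₀ ⊂ … ⊂ Wₙ = W` with Cartan characters `sᵢ = dim T_{W_{i-1}} − dim T_{W_i}`,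
the first prolongation `ker δ ⊆ Hom(W, Λ^k(W;V))` has dimension `s₁ + 2·s₂ + … + n·sₙ`. -/
theorem tautological_tableau_cartan_test {n : ℕ} (k : ℕ) (hk : 1 ≤ k)
    (Wf : Fin (n + 1) → Submodule ℝ W)
    (hmono : Monotone Wf) (hbot : Wf 0 = ⊥) (htop : Wf (Fin.last n) = ⊤)
    (hdim : ∀ i : Fin (n + 1), finrank ℝ (Wf i) = (i : ℕ)) :
    finrank ℝ ↥(spencerKer k W V) =
      ∑ i : Fin n, ((i : ℕ) + 1) *
        (finrank ℝ ↥(vanishingOn k (Wf i.castSucc) (V := V)) -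
         finrank ℝ ↥(vanishingOn k (Wf i.succ) (V := V))) := by
  have hn : finrank ℝ W = n := by
    rw [← finrank_top ℝ W, ← htop, hdim, Fin.val_last]
  have hanti : Antitone fun i => finrank ℝ (vanishingOn k (Wf i) (V := V)) :=
    fun _ _ hij => Submodule.finrank_mono (vanishingOn_antitone k (hmono hij))
  have hlast : finrank ℝ (vanishingOn k (Wf (Fin.last n)) (V := V)) = 0 := by
    rw [htop, vanishingOn_top, finrank_bot]
  calc finrank ℝ (spencerKer k W V)
      = ∑ i : Fin n, finrank ℝ (vanishingOn k (Wf i.castSucc) (V := V)) :=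
        finrank_spencerKer_eq_sum_finrank_vanishingOn k V hn fun i => hdim i.castSucc
    _ = ∑ i : Fin n, ((i : ℕ) + 1) *
          (finrank ℝ (vanishingOn k (Wf i.castSucc) (V := V)) -
            finrank ℝ (vanishingOn k (Wf i.succ) (V := V))) := by
        rw [← sum_succ_mul_sub_succ_add_of_antitone hanti, hlast, mul_zero, add_zero]
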